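/- If u ∈ 𝒜₂ and v ∈ 𝒜₁, then there is a constant c_* ≥ 1, depending only on the C²-norms ‖u‖₂ and ‖v‖₂ (and independent of α₀, H₁, H₂), such that ‖∂^α(uv)‖₀ ≤ c_* H₁^{α₁−1} H₂^{α₂} [(|α|−2)!]^s for every α = (α₁,α₂) ≤ α₀ with |α| ≥ 2 (i.e. c_*^{−1} uv ∈ 𝒜₁). If additionally w ∈ 𝒜₂, then there is a constant c_*' ≥ 1 depending only on ‖u‖₂, ‖v‖₂, ‖w‖₂ such that c_*'^{−1} uvw ∈ 𝒜₁. -/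

import Mathlib

open Set

noncomputable section

/-- The closed strip `R̄ = ℝ × [p₀, 0]`. -/
def Strip (p₀ : ℝ) : Set (ℝ × ℝ) := {z : ℝ × ℝ | p₀ ≤ z.2 ∧ z.2 ≤ 0}

/-- The mixed partial derivative `∂_q^a ∂_p^b f` of `f : ℝ² → ℝ` within the set `S`,
realized as the iterated Fréchet derivative within `S` applied to the corresponding
coordinate directions. -/
def mpw (S : Set (ℝ × ℝ)) (a b : ℕ) (f : ℝ × ℝ → ℝ) (z : ℝ × ℝ) : ℝ :=
  iteratedFDerivWithin ℝ (a + b) f S z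
    (fun i => if (i : ℕ) < a then ((1 : ℝ), (0 : ℝ)) else ((0 : ℝ), (1 : ℝ)))

/-- `∂_q^a ∂_p^b f` within the strip `R̄`. -/
def pd (p₀ : ℝ) (a b : ℕ) (f : ℝ × ℝ → ℝ) : ℝ × ℝ → ℝ := mpw (Strip p₀) a b f

/-- Euclidean distance on `ℝ²`. -/
def edist2 (z z' : ℝ × ℝ) : ℝ := Real.sqrt ((z.1 - z'.1) ^ 2 + (z.2 - z'.2) ^ 2)

/-- `sup_{R̄} |f|`. -/
def supS (p₀ : ℝ) (f : ℝ × ℝ → ℝ) : ℝ := sSup ((fun z => |f z|) '' Strip p₀)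

/-- The Hölder seminorm of exponent `μ` of `f` over the strip `R̄`. -/
def hsemi (p₀ μ : ℝ) (f : ℝ × ℝ → ℝ) : ℝ :=
  sSup {y | ∃ z ∈ Strip p₀, ∃ z' ∈ Strip p₀, z ≠ z' ∧ y = |f z - f z'| / (edist2 z z') ^ μ}

/-- The `C^k` sup-norm `‖f‖_k = Σ_{|α| ≤ k} sup_{R̄} |∂^α f|`. -/
def cknorm (p₀ : ℝ) (k : ℕ) (f : ℝ × ℝ → ℝ) : ℝ :=
  ∑ a ∈ Finset.range (k + 1), ∑ b ∈ Finset.range (k + 1 - a), supS p₀ (pd p₀ a b f)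

/-- The Hölder norm `‖f‖_{k,μ} = ‖f‖_k + max_{|α| = k} [∂^α f]_μ`. -/
def hnorm (p₀ μ : ℝ) (k : ℕ) (f : ℝ × ℝ → ℝ) : ℝ :=
  cknorm p₀ k f + sSup {y | ∃ a b : ℕ, a + b = k ∧ y = hsemi p₀ μ (pd p₀ a b f)}

/-- Boundedness of `f` on the strip (finiteness of `sup_{R̄} |f|`). -/
def bddS (p₀ : ℝ) (f : ℝ × ℝ → ℝ) : Prop := BddAbove ((fun z => |f z|) '' Strip p₀)

/-- Finiteness of the Hölder seminorm of `f` on the strip. -/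
def bddH (p₀ μ : ℝ) (f : ℝ × ℝ → ℝ) : Prop :=
  BddAbove {y | ∃ z ∈ Strip p₀, ∃ z' ∈ Strip p₀, z ≠ z' ∧ y = |f z - f z'| / (edist2 z z') ^ μ}

/-- Finiteness of the `C^{k,μ}(R̄)` norm. -/
def finCk (p₀ μ : ℝ) (k : ℕ) (f : ℝ × ℝ → ℝ) : Prop :=
  (∀ a b : ℕ, a + b ≤ k → bddS p₀ (pd p₀ a b f)) ∧
  (∀ a b : ℕ, a + b = k → bddH p₀ μ (pd p₀ a b f))

/-- Membership in `C^{k,μ}(R̄)`: `k` times continuously differentiable on the strip with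
bounded derivatives, the top-order ones Hölder continuous of exponent `μ`. -/
def MemCk (p₀ μ : ℝ) (k : ℕ) (f : ℝ × ℝ → ℝ) : Prop :=
  ContDiffOn ℝ k f (Strip p₀) ∧ finCk p₀ μ k f

/-- The class `𝒜_j`: functions `f ∈ C^{|α₀|,μ}(R̄)` such that
`‖∂^α f‖₀ ≤ H₁^{α₁−j} H₂^{α₂} [(|α|−j−1)!]^s` for every `α ≤ α₀` with `|α| ≥ j+1`. -/
def memA (p₀ μ s H₁ H₂ : ℝ) (α₀ : ℕ × ℕ) (j : ℕ) (f : ℝ × ℝ → ℝ) : Prop :=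
  MemCk p₀ μ (α₀.1 + α₀.2) f ∧
  ∀ a b : ℕ, a ≤ α₀.1 → b ≤ α₀.2 → j + 1 ≤ a + b →
    ∀ z ∈ Strip p₀, |pd p₀ a b f z| ≤
      H₁ ^ ((a : ℤ) - (j : ℤ)) * H₂ ^ b * (Nat.factorial (a + b - (j + 1)) : ℝ) ^ s

/-! Replace the weight `H₁^{a-j} H₂^b` by its maximum with `1`. Since `1 ≤ H₁ ≤ H₂`, nothing changes
for `a + b ≥ j`, but now the weight is submultiplicative, the defining inequalities of `𝒜_j` extend
to all orders at the cost of a low-order `C^k` norm, and, because the weight decreases in `j`, the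
class `𝒜₂` is contained in `𝒜₁` up to a constant. It remains to see that `𝒜_j` is stable under
products for `j ≥ 1`. The Leibniz rule is a double binomial sum whose factorial weights depend only
on the total orders, so Vandermonde's identity reduces it to a single sum over `k + l = |α|`. With
`m = j + 1`,
`(k + l choose k) (k - m)! (l - m)! / (k + l - m)! ≲ (k + 1)^{-m} + (l + 1)^{-m}`,
which is summable because `m ≥ 2`; and as `(k - m)! (l - m)! ≤ (k + l - m)!`, raising the factorials
to a power `s ≥ 1` only helps. -/

section BinomSum

open Finset.HasAntidiagonal (antidiagonal mem_antidiagonal)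

/-- The binomial sum `∑_{i + i' = n} (n choose i) F i i'`, the common shape of the Leibniz rule
and of Vandermonde's identity; the two-dimensional versions are obtained by nesting. -/
def binomSum {R : Type*} [NonAssocSemiring R] (n : ℕ) (F : ℕ → ℕ → R) : R :=
  ∑ x ∈ antidiagonal n, (n.choose x.1 : R) * F x.1 x.2

section NonAssocSemiring

variable {R : Type*} [NonAssocSemiring R]

lemma binomSum_zero (F : ℕ → ℕ → R) : binomSum 0 F = F 0 0 := by
  simp [binomSum]

lemma binomSum_congr {n : ℕ} {F G : ℕ → ℕ → R} (h : ∀ i i', i + i' = n → F i i' = G i i') :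
    binomSum n F = binomSum n G :=
  Finset.sum_congr rfl fun _ hx => by rw [h _ _ (mem_antidiagonal.1 hx)]

lemma binomSum_add (n : ℕ) (F G : ℕ → ℕ → R) :
    (binomSum n fun i i' => F i i' + G i i') = binomSum n F + binomSum n G := by
  simp only [binomSum, mul_add, Finset.sum_add_distrib]

lemma binomSum_succ (n : ℕ) (F : ℕ → ℕ → R) :
    binomSum (n + 1) F =
      (binomSum n fun i i' => F (i + 1) i') + binomSum n fun i i' => F i (i' + 1) := by
  rw [binomSum, Finset.sum_antidiagonal_choose_succ_mul, add_comm]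
  congr 1
  refine Finset.sum_congr rfl fun x hx => ?_
  rw [Nat.choose_symm_of_eq_add (mem_antidiagonal.1 hx).symm]

lemma binomSum_binomSum_add (a b : ℕ) (F : ℕ → ℕ → R) :
    (binomSum a fun i i' => binomSum b fun k k' => F (i + k) (i' + k')) =
      binomSum (a + b) F := by
  induction a generalizing F with
  | zero => simp only [binomSum_zero, zero_add]
  | succ a ih =>
    simp only [binomSum_succ, Nat.add_right_comm _ 1]
    rw [ih fun i i' => F (i + 1) i', ih fun i i' => F i (i' + 1)]

end NonAssocSemiring

lemma mul_binomSum {R : Type*} [CommSemiring R] (n : ℕ) (c : R) (F : ℕ → ℕ → R) :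
    c * binomSum n F = binomSum n fun i i' => c * F i i' := by
  simp only [binomSum, Finset.mul_sum, mul_left_comm]

lemma abs_binomSum_le {R : Type*} [Ring R] [LinearOrder R] [IsStrictOrderedRing R] {n : ℕ}
    {F G : ℕ → ℕ → R} (h : ∀ i i', i + i' = n → |F i i'| ≤ G i i') :
    |binomSum n F| ≤ binomSum n G := by
  refine (Finset.abs_sum_le_sum_abs _ _).trans (Finset.sum_le_sum fun x hx => ?_)
  rw [abs_mul, Nat.abs_cast]
  exact mul_le_mul_of_nonneg_left (h _ _ (mem_antidiagonal.1 hx)) (Nat.cast_nonneg _)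

section Derivative

variable {𝕜 E : Type*} [NontriviallyNormedField 𝕜] [NormedAddCommGroup E] [NormedSpace 𝕜 E]
  {S : Set E} {z : E} {n : ℕ} {F : ℕ → ℕ → E → 𝕜}

lemma differentiableWithinAt_binomSum
    (hF : ∀ i i', i + i' = n → DifferentiableWithinAt 𝕜 (F i i') S z) :
    DifferentiableWithinAt 𝕜 (fun y => binomSum n fun i i' => F i i' y) S z :=
  DifferentiableWithinAt.fun_sum fun _ hx =>
    (hF _ _ (mem_antidiagonal.1 hx)).const_mul _

lemma fderivWithin_binomSum_apply (hS : UniqueDiffWithinAt 𝕜 S z)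
    (hF : ∀ i i', i + i' = n → DifferentiableWithinAt 𝕜 (F i i') S z) (e : E) :
    fderivWithin 𝕜 (fun y => binomSum n fun i i' => F i i' y) S z e =
      binomSum n fun i i' => fderivWithin 𝕜 (F i i') S z e := by
  have hsum : HasFDerivWithinAt (fun y => binomSum n fun i i' => F i i' y)
      (∑ x ∈ antidiagonal n, (n.choose x.1 : 𝕜) • fderivWithin 𝕜 (F x.1 x.2) S z) S z :=
    HasFDerivWithinAt.fun_sum fun _ hx =>
      (hF _ _ (mem_antidiagonal.1 hx)).hasFDerivWithinAt.const_mul _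
  rw [hsum.fderivWithin hS]
  simp only [binomSum, sum_apply, smul_apply, smul_eq_mul]

end Derivative

end BinomSum

section Leibniz

variable {S : Set (ℝ × ℝ)} {f u v : ℝ × ℝ → ℝ} {N a b : ℕ} {z : ℝ × ℝ}

lemma mpw_eq_of_add_eq {n : ℕ} (h : a + b = n) : mpw S a b f z = iteratedFDerivWithin ℝ n f S z
    (fun i => if (i : ℕ) < a then ((1 : ℝ), (0 : ℝ)) else ((0 : ℝ), (1 : ℝ))) := by
  subst h
  rfl

lemma mpw_zero_zero : mpw S 0 0 f z = f z := by
  simp [mpw]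

lemma differentiableWithinAt_mpw (hS : UniqueDiffOn ℝ S) (hf : ContDiffOn ℝ N f S)
    (hN : a + b < N) (hz : z ∈ S) : DifferentiableWithinAt ℝ (mpw S a b f) S z :=
  (hf.differentiableOn_iteratedFDerivWithin (mod_cast hN) hS z hz).continuousMultilinear_apply_const
    _

lemma mpw_succ_left (hS : UniqueDiffOn ℝ S) (hf : ContDiffOn ℝ N f S) (hN : a + b < N)
    (hz : z ∈ S) : mpw S (a + 1) b f z = fderivWithin ℝ (mpw S a b f) S z (1, 0) := by
  have hd := hf.differentiableOn_iteratedFDerivWithin (mod_cast hN) hS z hz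
  unfold mpw
  rw [fderivWithin_continuousMultilinear_apply_const_apply (hS z hz) hd, ← mpw,
    mpw_eq_of_add_eq (Nat.add_right_comm a 1 b), iteratedFDerivWithin_succ_apply_left]
  congr 1
  simp [Fin.tail_def]

-- `mpw` lists the `q`-directions first, so `∂_p` can be split off on the left only when `a = 0`.
lemma mpw_zero_succ (hS : UniqueDiffOn ℝ S) (hf : ContDiffOn ℝ N f S) (hN : b < N)
    (hz : z ∈ S) : mpw S 0 (b + 1) f z = fderivWithin ℝ (mpw S 0 b f) S z (0, 1) := by
  have hd := hf.differentiableOn_iteratedFDerivWithin (m := 0 + b) (mod_cast by omega) hS z hz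
  unfold mpw
  rw [fderivWithin_continuousMultilinear_apply_const_apply (hS z hz) hd, ← mpw,
    mpw_eq_of_add_eq (Nat.add_assoc 0 b 1).symm, iteratedFDerivWithin_succ_apply_left]
  congr 1

lemma fderivWithin_binomSum_mpw_mul_mpw (hS : UniqueDiffOn ℝ S) (hu : ContDiffOn ℝ N u S)
    (hv : ContDiffOn ℝ N v S) (hN : a + b < N) (hz : z ∈ S) (e : ℝ × ℝ) :
    fderivWithin ℝ (fun y => binomSum a fun i i' => binomSum b fun k k' =>
        mpw S i k u y * mpw S i' k' v y) S z e =
      (binomSum a fun i i' => binomSum b fun k k' =>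
        fderivWithin ℝ (mpw S i k u) S z e * mpw S i' k' v z) +
      binomSum a fun i i' => binomSum b fun k k' =>
        mpw S i k u z * fderivWithin ℝ (mpw S i' k' v) S z e := by
  have hdu {i i' k k' : ℕ} (hi : i + i' = a) (hk : k + k' = b) :=
    differentiableWithinAt_mpw (a := i) (b := k) hS hu (by omega) hz
  have hdv {i i' k k' : ℕ} (hi : i + i' = a) (hk : k + k' = b) :=
    differentiableWithinAt_mpw (a := i') (b := k') hS hv (by omega) hz
  rw [fderivWithin_binomSum_apply (hS z hz) (fun i i' hi => differentiableWithinAt_binomSum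
    fun k k' hk => (hdu hi hk).fun_mul (hdv hi hk)), ← binomSum_add]
  refine binomSum_congr fun i i' hi => ?_
  rw [fderivWithin_binomSum_apply (hS z hz) fun k k' hk => (hdu hi hk).fun_mul (hdv hi hk),
    ← binomSum_add]
  refine binomSum_congr fun k k' hk => ?_
  rw [fderivWithin_fun_mul (hS z hz) (hdu hi hk) (hdv hi hk)]
  simp only [add_apply, smul_apply, smul_eq_mul]
  ring

theorem mpw_mul (hS : UniqueDiffOn ℝ S) (hu : ContDiffOn ℝ N u S) (hv : ContDiffOn ℝ N v S)
    (hN : a + b ≤ N) (hz : z ∈ S) :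
    mpw S a b (fun y => u y * v y) z =
      binomSum a fun i i' => binomSum b fun k k' => mpw S i k u z * mpw S i' k' v z := by
  have huv : ContDiffOn ℝ N (fun y => u y * v y) S := hu.mul hv
  induction a generalizing z with
  | zero =>
    induction b generalizing z with
    | zero => simp only [mpw_zero_zero, binomSum_zero]
    | succ b ih =>
      rw [mpw_zero_succ hS huv (by omega) hz,
        fderivWithin_congr (fun y hy => ih (by omega) hy) (ih (by omega) hz),
        fderivWithin_binomSum_mpw_mul_mpw hS hu hv (by omega) hz]
      simp only [binomSum_zero]
      rw [binomSum_succ]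
      congr 1 <;> refine binomSum_congr fun k k' hk => ?_
      · rw [mpw_zero_succ hS hu (by omega) hz]
      · rw [mpw_zero_succ hS hv (by omega) hz]
  | succ a ih =>
    rw [mpw_succ_left hS huv (by omega) hz,
      fderivWithin_congr (fun y hy => ih (by omega) hy) (ih (by omega) hz),
      fderivWithin_binomSum_mpw_mul_mpw hS hu hv (by omega) hz, binomSum_succ]
    congr 1 <;> refine binomSum_congr fun i i' hi => binomSum_congr fun k k' hk => ?_
    · rw [mpw_succ_left hS hu (by omega) hz]
    · rw [mpw_succ_left hS hv (by omega) hz]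

end Leibniz

section Factorials

open scoped Nat
open Finset.HasAntidiagonal (antidiagonal mem_antidiagonal)

lemma factorial_le_factorial_sub_mul_pow (n m : ℕ) : n ! ≤ (n - m)! * (n + 1) ^ m := by
  rcases le_total m n with h | h
  · rw [← Nat.factorial_mul_descFactorial h]
    gcongr
    exact (Nat.descFactorial_le_pow n m).trans (Nat.pow_le_pow_left n.le_succ m)
  · calc n ! ≤ n ^ n := Nat.factorial_le_pow n
      _ ≤ (n + 1) ^ m := (Nat.pow_le_pow_left n.le_succ n).trans (Nat.pow_le_pow_right n.succ_pos h)
      _ = (n - m)! * (n + 1) ^ m := by simp [Nat.sub_eq_zero_of_le h]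

lemma factorial_sub_mul_pow_le (n m : ℕ) : (n - m)! * (n + 1) ^ m ≤ (m + 1) ^ m * n ! := by
  rcases le_total m n with h | h
  · have hn : n + 1 ≤ (m + 1) * (n + 1 - m) := by
      obtain ⟨d, rfl⟩ := Nat.exists_eq_add_of_le h
      rw [show m + d + 1 - m = d + 1 by omega]
      nlinarith
    calc (n - m)! * (n + 1) ^ m ≤ (n - m)! * ((m + 1) * (n + 1 - m)) ^ m := by gcongr
      _ = (m + 1) ^ m * ((n - m)! * (n + 1 - m) ^ m) := by
        rw [mul_pow, mul_left_comm]
      _ ≤ (m + 1) ^ m * ((n - m)! * n.descFactorial m) := by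
        gcongr
        exact Nat.pow_sub_le_descFactorial n m
      _ = (m + 1) ^ m * n ! := by rw [Nat.factorial_mul_descFactorial h]
  · calc (n - m)! * (n + 1) ^ m = (n + 1) ^ m := by simp [Nat.sub_eq_zero_of_le h]
      _ ≤ (m + 1) ^ m := by gcongr
      _ ≤ (m + 1) ^ m * n ! := Nat.le_mul_of_pos_right _ n.factorial_pos

lemma factorial_sub_mul_factorial_sub_le (k l m : ℕ) :
    (k - m)! * (l - m)! ≤ (k + l - m)! :=
  (Nat.le_of_dvd (Nat.factorial_pos _) (Nat.factorial_mul_factorial_dvd_factorial_add _ _)).trans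
    (Nat.factorial_le (by omega))

lemma add_choose_mul_factorial_sub_mul_pow_le (k l m : ℕ) :
    (k + l).choose k * ((k - m)! * (l - m)!) * ((k + 1) ^ m * (l + 1) ^ m) ≤
      (m + 1) ^ (2 * m) * (k + l - m)! * (2 ^ (m - 1) * ((k + 1) ^ m + (l + 1) ^ m)) := by
  calc (k + l).choose k * ((k - m)! * (l - m)!) * ((k + 1) ^ m * (l + 1) ^ m)
      = (k + l).choose k * (((k - m)! * (k + 1) ^ m) * ((l - m)! * (l + 1) ^ m)) := by ring
    _ ≤ (k + l).choose k * (((m + 1) ^ m * k !) * ((m + 1) ^ m * l !)) := by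
      gcongr _ * (?_ * ?_) <;> exact factorial_sub_mul_pow_le _ m
    _ = (m + 1) ^ (2 * m) * (k + l)! := by
      rw [← Nat.add_choose_mul_factorial_mul_factorial, ← Nat.choose_symm_add]
      ring
    _ ≤ (m + 1) ^ (2 * m) * ((k + l - m)! * (k + l + 1) ^ m) := by
      gcongr
      exact factorial_le_factorial_sub_mul_pow (k + l) m
    _ ≤ (m + 1) ^ (2 * m) * ((k + l - m)! * ((k + 1) + (l + 1)) ^ m) := by
      gcongr _ * (_ * ?_ ^ m)
      omega
    _ ≤ (m + 1) ^ (2 * m) * ((k + l - m)! * (2 ^ (m - 1) * ((k + 1) ^ m + (l + 1) ^ m))) := by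
      gcongr
      exact add_pow_le (Nat.zero_le _) (Nat.zero_le _) m
    _ = _ := by ring

lemma add_choose_mul_factorial_sub_le {m : ℕ} (hm : 2 ≤ m) (k l : ℕ) :
    ((k + l).choose k : ℝ) * ((k - m)! * (l - m)!) ≤
      2 ^ (m - 1) * (m + 1) ^ (2 * m) * ((((k : ℝ) + 1) ^ 2)⁻¹ + (((l : ℝ) + 1) ^ 2)⁻¹) *
        (k + l - m)! := by
  have inv_pow_le (n : ℕ) : (((n : ℝ) + 1) ^ m)⁻¹ ≤ (((n : ℝ) + 1) ^ 2)⁻¹ := by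
    gcongr
    linarith [n.cast_nonneg (α := ℝ)]
  have key : ((k + l).choose k : ℝ) * ((k - m)! * (l - m)!) *
      (((k : ℝ) + 1) ^ m * ((l : ℝ) + 1) ^ m) ≤ ((m : ℝ) + 1) ^ (2 * m) * (k + l - m)! *
        (2 ^ (m - 1) * (((k : ℝ) + 1) ^ m + ((l : ℝ) + 1) ^ m)) :=
    mod_cast add_choose_mul_factorial_sub_mul_pow_le k l m
  calc _ ≤ ((m : ℝ) + 1) ^ (2 * m) * (k + l - m)! *
        (2 ^ (m - 1) * (((k : ℝ) + 1) ^ m + ((l : ℝ) + 1) ^ m)) /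
          (((k : ℝ) + 1) ^ m * ((l : ℝ) + 1) ^ m) := (le_div_iff₀ (by positivity)).2 key
    _ = 2 ^ (m - 1) * ((m : ℝ) + 1) ^ (2 * m) *
        ((((k : ℝ) + 1) ^ m)⁻¹ + (((l : ℝ) + 1) ^ m)⁻¹) * (k + l - m)! := by
      field_simp
      ring
    _ ≤ _ := by gcongr _ * (?_ + ?_) * _ <;> exact inv_pow_le _

lemma sum_range_inv_add_one_sq_le (n : ℕ) :
    ∑ k ∈ Finset.range n, (((k : ℝ) + 1) ^ 2)⁻¹ ≤ 2 := by
  calc ∑ k ∈ Finset.range n, (((k : ℝ) + 1) ^ 2)⁻¹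
      = ∑ k ∈ Finset.Ioo 0 (n + 1), ((k : ℝ) ^ 2)⁻¹ := by
        rw [← Finset.Ico_succ_left_eq_Ioo, Finset.range_eq_Ico, Nat.succ_eq_succ,
          ← Finset.sum_Ico_add' (fun k : ℕ => ((k : ℝ) ^ 2)⁻¹) 0 n 1]
        simp only [Nat.cast_add_one]
    _ ≤ 2 := by simpa using sum_Ioo_inv_sq_le (α := ℝ) 0 (n + 1)

lemma mul_rpow_le_mul_rpow {c x q d s : ℝ} (hc : 0 ≤ c) (hx : 0 < x) (hxd : x ≤ d)
    (h : c * x ≤ q * d) (hs : 1 ≤ s) : c * x ^ s ≤ q * d ^ s := by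
  have rpow_eq {t : ℝ} (ht : 0 < t) : t ^ s = t * t ^ (s - 1) := by
    rw [← Real.rpow_one_add' ht.le (by linarith), add_sub_cancel]
  rw [rpow_eq hx, rpow_eq (hx.trans_le hxd), ← mul_assoc, ← mul_assoc]
  exact mul_le_mul h (Real.rpow_le_rpow hx.le hxd (by linarith)) (by positivity)
    ((mul_nonneg hc hx.le).trans h)

/-- The constant of the Gevrey product estimate for the weights `[(n - m)!]^s`. -/
def gevreyMulConst (m : ℕ) : ℝ := 2 ^ (m - 1) * (m + 1) ^ (2 * m) * 4

lemma one_le_gevreyMulConst (m : ℕ) : 1 ≤ gevreyMulConst m := by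
  have hpow : (1 : ℝ) ≤ 2 ^ (m - 1) * ((m : ℝ) + 1) ^ (2 * m) :=
    one_le_mul_of_one_le_of_one_le (one_le_pow₀ one_le_two)
      (one_le_pow₀ (by linarith [m.cast_nonneg (α := ℝ)]))
  rw [gevreyMulConst]
  linarith

theorem binomSum_factorial_sub_rpow_le {m : ℕ} (hm : 2 ≤ m) {s : ℝ} (hs : 1 ≤ s) (n : ℕ) :
    (binomSum n fun k l => ((k - m)! : ℝ) ^ s * ((l - m)! : ℝ) ^ s) ≤
      gevreyMulConst m * ((n - m)! : ℝ) ^ s := by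
  set A : ℝ := 2 ^ (m - 1) * ((m : ℝ) + 1) ^ (2 * m)
  set q : ℕ → ℝ := fun k => (((k : ℝ) + 1) ^ 2)⁻¹
  have hterm (k l : ℕ) : ((k + l).choose k : ℝ) * (((k - m)! : ℝ) ^ s * ((l - m)! : ℝ) ^ s) ≤
      A * (q k + q l) * ((k + l - m)! : ℝ) ^ s := by
    rw [← Real.mul_rpow (by positivity) (by positivity)]
    exact mul_rpow_le_mul_rpow (by positivity) (by positivity)
      (mod_cast factorial_sub_mul_factorial_sub_le k l m)
      (add_choose_mul_factorial_sub_le hm k l) hs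
  have hfst : ∑ x ∈ antidiagonal n, q x.1 ≤ 2 := by
    rw [Finset.Nat.sum_antidiagonal_eq_sum_range_succ fun k _ => q k]
    exact sum_range_inv_add_one_sq_le _
  have hsnd : ∑ x ∈ antidiagonal n, q x.2 ≤ 2 := by
    rwa [← Finset.Nat.sum_antidiagonal_swap]
  calc _ ≤ ∑ x ∈ antidiagonal n, A * (q x.1 + q x.2) * ((n - m)! : ℝ) ^ s := by
        refine Finset.sum_le_sum fun x hx => ?_
        obtain rfl := mem_antidiagonal.1 hx
        exact hterm x.1 x.2
    _ = A * (∑ x ∈ antidiagonal n, q x.1 + ∑ x ∈ antidiagonal n, q x.2) *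
        ((n - m)! : ℝ) ^ s := by
        rw [← Finset.sum_mul, ← Finset.mul_sum, Finset.sum_add_distrib]
    _ ≤ A * 4 * ((n - m)! : ℝ) ^ s := by
        gcongr
        linarith

end Factorials

section AnisotropicWeight

/-- The anisotropic weight `H₁^{a-j} H₂^b` of the class `𝒜_j`, replaced by `1` where it is smaller.
The truncation makes the weight meaningful also for the orders `a + b ≤ j` on which membership in
`𝒜_j` says nothing. -/
def anisoWeight (H₁ H₂ : ℝ) (j a b : ℕ) : ℝ := max 1 (H₁ ^ ((a : ℤ) - j) * H₂ ^ b)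

variable {H₁ H₂ : ℝ} {j : ℕ}

lemma one_le_anisoWeight (a b : ℕ) : 1 ≤ anisoWeight H₁ H₂ j a b := le_max_left _ _

lemma anisoWeight_antitone (hH₁ : 1 ≤ H₁) (hH₂ : 0 ≤ H₂) {i : ℕ} (hji : j ≤ i) (a b : ℕ) :
    anisoWeight H₁ H₂ i a b ≤ anisoWeight H₁ H₂ j a b := by
  unfold anisoWeight
  gcongr

lemma anisoWeight_eq (hH₁ : 1 ≤ H₁) (hH : H₁ ≤ H₂) {a b : ℕ} (hab : j ≤ a + b) :
    anisoWeight H₁ H₂ j a b = H₁ ^ ((a : ℤ) - j) * H₂ ^ b := by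
  refine max_eq_right ?_
  have hpos : 0 < H₁ := by linarith
  calc 1 ≤ H₁ ^ ((a : ℤ) - j + b) := one_le_zpow₀ hH₁ (by omega)
    _ = H₁ ^ ((a : ℤ) - j) * H₁ ^ b := by rw [zpow_add₀ hpos.ne', zpow_natCast]
    _ ≤ H₁ ^ ((a : ℤ) - j) * H₂ ^ b := by gcongr

lemma anisoWeight_mul_le (hH₁ : 1 ≤ H₁) (hH₂ : 1 ≤ H₂) (a b a' b' : ℕ) :
    anisoWeight H₁ H₂ j a b * anisoWeight H₁ H₂ j a' b' ≤
      anisoWeight H₁ H₂ j (a + a') (b + b') := by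
  have hpos : 0 < H₁ := by linarith
  have hpow {n : ℤ} {c : ℕ} (hn : n ≤ ((a + a' : ℕ) : ℤ) - j) (hc : c ≤ b + b') :
      H₁ ^ n * H₂ ^ c ≤ anisoWeight H₁ H₂ j (a + a') (b + b') :=
    (mul_le_mul (zpow_le_zpow_right₀ hH₁ hn) (pow_le_pow_right₀ hH₂ hc) (by positivity)
      (by positivity)).trans (le_max_right _ _)
  have hmul : H₁ ^ ((a : ℤ) - j) * H₂ ^ b * (H₁ ^ ((a' : ℤ) - j) * H₂ ^ b') =
      H₁ ^ ((a : ℤ) - j + (a' - j)) * H₂ ^ (b + b') := by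
    rw [zpow_add₀ hpos.ne', pow_add]
    ring
  rw [anisoWeight, anisoWeight, max_mul_of_nonneg _ _ (by positivity), one_mul,
    mul_max_of_nonneg _ _ (by positivity), mul_one, hmul]
  exact max_le (max_le (one_le_anisoWeight _ _) (hpow (by omega) (by omega)))
    (max_le (hpow (by omega) (by omega)) (hpow (by omega) le_rfl))

end AnisotropicWeight

section GevreyBound

open scoped Nat

/-- The array `g` satisfies, up to the factor `M`, the inequalities defining the class `𝒜_j` for
all orders `(a, b) ≤ α₀`, including the low orders `a + b ≤ j`. It is applied to the derivatives
`g a b = ∂_q^a ∂_p^b f (z)` at a fixed point `z`. -/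
def GevreyBound (s H₁ H₂ : ℝ) (α₀ : ℕ × ℕ) (j : ℕ) (M : ℝ) (g : ℕ → ℕ → ℝ) : Prop :=
  ∀ a ≤ α₀.1, ∀ b ≤ α₀.2, |g a b| ≤ M * anisoWeight H₁ H₂ j a b * ((a + b - (j + 1))! : ℝ) ^ s

variable {s H₁ H₂ : ℝ} {α₀ : ℕ × ℕ} {j : ℕ} {M M' : ℝ}

namespace GevreyBound

lemma abs_le {g : ℕ → ℕ → ℝ} (hg : GevreyBound s H₁ H₂ α₀ j M g) (hH₁ : 1 ≤ H₁) (hH : H₁ ≤ H₂)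
    {a b : ℕ} (ha : a ≤ α₀.1) (hb : b ≤ α₀.2) (hab : j ≤ a + b) :
    |g a b| ≤ M * H₁ ^ ((a : ℤ) - j) * H₂ ^ b * ((a + b - (j + 1))! : ℝ) ^ s := by
  simpa only [anisoWeight_eq hH₁ hH hab, mul_assoc] using hg a ha b hb

theorem binomSum_mul {g f : ℕ → ℕ → ℝ} (hs : 1 ≤ s) (hH₁ : 1 ≤ H₁) (hH₂ : 1 ≤ H₂) (hj : 1 ≤ j)
    (hM : 0 ≤ M) (hM' : 0 ≤ M') (hg : GevreyBound s H₁ H₂ α₀ j M g)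
    (hf : GevreyBound s H₁ H₂ α₀ j M' f) :
    GevreyBound s H₁ H₂ α₀ j (gevreyMulConst (j + 1) * (M * M'))
      fun a b => binomSum a fun i i' => binomSum b fun k k' => g i k * f i' k' := by
  intro a ha b hb
  set W := anisoWeight H₁ H₂ j
  set h : ℕ → ℝ := fun n => ((n - (j + 1))! : ℝ) ^ s
  have hW (i k : ℕ) : 0 ≤ W i k := zero_le_one.trans (one_le_anisoWeight i k)
  have hterm (i i' k k' : ℕ) (hi : i + i' = a) (hk : k + k' = b) :
      |g i k * f i' k'| ≤ M * M' * W a b * (h (i + k) * h (i' + k')) := by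
    have hWW : W i k * W i' k' ≤ W a b := by
      simpa only [hi, hk] using anisoWeight_mul_le (j := j) hH₁ hH₂ i k i' k'
    calc |g i k * f i' k'|
        ≤ (M * W i k * h (i + k)) * (M' * W i' k' * h (i' + k')) := by
          rw [abs_mul]
          exact mul_le_mul (hg i (by omega) k (by omega)) (hf i' (by omega) k' (by omega))
            (abs_nonneg _) ((abs_nonneg _).trans (hg i (by omega) k (by omega)))
      _ = M * M' * (W i k * W i' k') * (h (i + k) * h (i' + k')) := by ring
      _ ≤ M * M' * W a b * (h (i + k) * h (i' + k')) := by gcongr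
  calc |binomSum a fun i i' => binomSum b fun k k' => g i k * f i' k'|
      ≤ binomSum a fun i i' => binomSum b fun k k' =>
          M * M' * W a b * (h (i + k) * h (i' + k')) :=
        abs_binomSum_le fun i i' hi => abs_binomSum_le fun k k' hk => hterm i i' k k' hi hk
    _ = M * M' * W a b * binomSum (a + b) fun n n' => h n * h n' := by
        rw [← binomSum_binomSum_add]
        simp only [mul_binomSum]
    _ ≤ M * M' * W a b * (gevreyMulConst (j + 1) * h (a + b)) := by
        have := hW a b
        gcongr
        exact binomSum_factorial_sub_rpow_le (by omega) hs (a + b)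
    _ = gevreyMulConst (j + 1) * (M * M') * W a b * h (a + b) := by ring

theorem mpw_mul {S : Set (ℝ × ℝ)} {u v : ℝ × ℝ → ℝ} {z : ℝ × ℝ} (hs : 1 ≤ s) (hH₁ : 1 ≤ H₁)
    (hH₂ : 1 ≤ H₂) (hj : 1 ≤ j) (hM : 0 ≤ M) (hM' : 0 ≤ M') (hS : UniqueDiffOn ℝ S)
    (hu : ContDiffOn ℝ (α₀.1 + α₀.2 : ℕ) u S) (hv : ContDiffOn ℝ (α₀.1 + α₀.2 : ℕ) v S)
    (hz : z ∈ S) (hgu : GevreyBound s H₁ H₂ α₀ j M fun a b => mpw S a b u z)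
    (hgv : GevreyBound s H₁ H₂ α₀ j M' fun a b => mpw S a b v z) :
    GevreyBound s H₁ H₂ α₀ j (gevreyMulConst (j + 1) * (M * M'))
      fun a b => mpw S a b (fun y => u y * v y) z := by
  intro a ha b hb
  beta_reduce
  rw [_root_.mpw_mul hS hu hv (add_le_add ha hb) hz]
  exact binomSum_mul hs hH₁ hH₂ hj hM hM' hgu hgv a ha b hb

end GevreyBound

end GevreyBound

section Strip

variable {p₀ : ℝ}

lemma uniqueDiffOn_strip (hp₀ : p₀ < 0) : UniqueDiffOn ℝ (Strip p₀) := by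
  have strip_eq : Strip p₀ = (univ : Set ℝ) ×ˢ Icc p₀ 0 := by
    ext
    simp [Strip]
  rw [strip_eq]
  exact uniqueDiffOn_univ.prod (uniqueDiffOn_Icc hp₀)

lemma supS_nonneg (f : ℝ × ℝ → ℝ) : 0 ≤ supS p₀ f := by
  refine Real.sSup_nonneg ?_
  rintro _ ⟨z, -, rfl⟩
  exact abs_nonneg _

lemma supS_pd_le_cknorm {k a b : ℕ} (hab : a + b ≤ k) (f : ℝ × ℝ → ℝ) :
    supS p₀ (pd p₀ a b f) ≤ cknorm p₀ k f :=
  calc supS p₀ (pd p₀ a b f) ≤ ∑ b ∈ Finset.range (k + 1 - a), supS p₀ (pd p₀ a b f) :=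
        Finset.single_le_sum (f := fun b => supS p₀ (pd p₀ a b f)) (fun _ _ => supS_nonneg _)
          (Finset.mem_range.2 (by omega))
    _ ≤ cknorm p₀ k f :=
        Finset.single_le_sum (f := fun a => ∑ b ∈ Finset.range (k + 1 - a), supS p₀ (pd p₀ a b f))
          (fun _ _ => Finset.sum_nonneg fun _ _ => supS_nonneg _) (Finset.mem_range.2 (by omega))

lemma MemCk.abs_pd_le_cknorm {μ : ℝ} {N k a b : ℕ} {f : ℝ × ℝ → ℝ} (hf : MemCk p₀ μ N f)
    (hN : a + b ≤ N) (hk : a + b ≤ k) {z : ℝ × ℝ} (hz : z ∈ Strip p₀) :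
    |pd p₀ a b f z| ≤ cknorm p₀ k f :=
  (le_csSup (hf.2.1 a b hN) ⟨z, hz, rfl⟩).trans (supS_pd_le_cknorm hk f)

lemma memA.gevreyBound {μ s H₁ H₂ M : ℝ} {α₀ : ℕ × ℕ} {i j k : ℕ} {f : ℝ × ℝ → ℝ}
    (hf : memA p₀ μ s H₁ H₂ α₀ i f) (hs : 0 ≤ s) (hH₁ : 1 ≤ H₁) (hH₂ : 0 ≤ H₂) (hji : j ≤ i)
    (hik : i ≤ k) (hM : 1 ≤ M) (hfM : cknorm p₀ k f ≤ M) {z : ℝ × ℝ} (hz : z ∈ Strip p₀) :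
    GevreyBound s H₁ H₂ α₀ j M fun a b => mpw (Strip p₀) a b f z := by
  intro a ha b hb
  have hW := one_le_anisoWeight (H₁ := H₁) (H₂ := H₂) (j := j) a b
  have hfac (n : ℕ) : 1 ≤ (n.factorial : ℝ) ^ s :=
    Real.one_le_rpow (mod_cast n.factorial_pos) hs
  rcases le_or_gt (a + b) i with hab | hab
  · calc |pd p₀ a b f z| ≤ M :=
          (hf.1.abs_pd_le_cknorm (add_le_add ha hb) (hab.trans hik) hz).trans hfM
      _ ≤ M * anisoWeight H₁ H₂ j a b := le_mul_of_one_le_right (by positivity) hW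
      _ ≤ _ := le_mul_of_one_le_right (by positivity) (hfac _)
  · calc |pd p₀ a b f z| ≤ H₁ ^ ((a : ℤ) - i) * H₂ ^ b * ((a + b - (i + 1)).factorial : ℝ) ^ s :=
          hf.2 a b ha hb hab z hz
      _ ≤ anisoWeight H₁ H₂ j a b * ((a + b - (j + 1)).factorial : ℝ) ^ s := by
          gcongr
          exact (le_max_right _ _).trans (anisoWeight_antitone hH₁ hH₂ hji a b)
      _ ≤ M * (anisoWeight H₁ H₂ j a b * ((a + b - (j + 1)).factorial : ℝ) ^ s) :=
          le_mul_of_one_le_left (by positivity) hM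
      _ = _ := by ring

end Strip

theorem memA_two_one_mul_general {i j : ℕ} (hj : 1 ≤ j) (hji : j ≤ i) (K : ℝ) :
    (∃ c : ℝ, 1 ≤ c ∧ ∀ (p₀ μ s H₁ H₂ : ℝ) (α₀ : ℕ × ℕ) (u v : ℝ × ℝ → ℝ),
      p₀ < 0 → 1 ≤ s → 1 ≤ H₁ → H₁ ≤ H₂ →
      cknorm p₀ i u ≤ K → cknorm p₀ i v ≤ K →
      memA p₀ μ s H₁ H₂ α₀ i u → memA p₀ μ s H₁ H₂ α₀ j v →
      ∀ a b : ℕ, a ≤ α₀.1 → b ≤ α₀.2 → j + 1 ≤ a + b → ∀ z ∈ Strip p₀,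
        |pd p₀ a b (fun y => u y * v y) z| ≤
          c * H₁ ^ ((a : ℤ) - j) * H₂ ^ b * (Nat.factorial (a + b - (j + 1)) : ℝ) ^ s) ∧
    (∃ c' : ℝ, 1 ≤ c' ∧ ∀ (p₀ μ s H₁ H₂ : ℝ) (α₀ : ℕ × ℕ) (u v w : ℝ × ℝ → ℝ),
      p₀ < 0 → 1 ≤ s → 1 ≤ H₁ → H₁ ≤ H₂ →
      cknorm p₀ i u ≤ K → cknorm p₀ i v ≤ K → cknorm p₀ i w ≤ K →
      memA p₀ μ s H₁ H₂ α₀ i u → memA p₀ μ s H₁ H₂ α₀ j v → memA p₀ μ s H₁ H₂ α₀ i w →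
      ∀ a b : ℕ, a ≤ α₀.1 → b ≤ α₀.2 → j + 1 ≤ a + b → ∀ z ∈ Strip p₀,
        |pd p₀ a b (fun y => u y * v y * w y) z| ≤
          c' * H₁ ^ ((a : ℤ) - j) * H₂ ^ b * (Nat.factorial (a + b - (j + 1)) : ℝ) ^ s) := by
  set M : ℝ := max K 1
  set C : ℝ := gevreyMulConst (j + 1)
  have hM : 1 ≤ M := le_max_right K 1
  have hC : 1 ≤ C := one_le_gevreyMulConst (j + 1)
  have hCMM : 1 ≤ C * (M * M) :=
    one_le_mul_of_one_le_of_one_le hC (one_le_mul_of_one_le_of_one_le hM hM)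
  refine ⟨⟨C * (M * M), hCMM, ?_⟩, ⟨C * (C * (M * M) * M),
    one_le_mul_of_one_le_of_one_le hC (one_le_mul_of_one_le_of_one_le hCMM hM), ?_⟩⟩
  · intro p₀ μ s H₁ H₂ α₀ u v hp₀ hs hH₁ hH hKu hKv hu hv a b ha hb hab z hz
    have hgu := hu.gevreyBound (by linarith) hH₁ (by linarith) hji le_rfl hM
      (hKu.trans (le_max_left K 1)) hz
    have hgv := hv.gevreyBound (by linarith) hH₁ (by linarith) le_rfl hji hM
      (hKv.trans (le_max_left K 1)) hz
    exact (hgu.mpw_mul hs hH₁ (hH₁.trans hH) hj (by linarith) (by linarith)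
      (uniqueDiffOn_strip hp₀) hu.1.1 hv.1.1 hz hgv).abs_le hH₁ hH ha hb (by omega)
  · intro p₀ μ s H₁ H₂ α₀ u v w hp₀ hs hH₁ hH hKu hKv hKw hu hv hw a b ha hb hab z hz
    have hgu := hu.gevreyBound (by linarith) hH₁ (by linarith) hji le_rfl hM
      (hKu.trans (le_max_left K 1)) hz
    have hgv := hv.gevreyBound (by linarith) hH₁ (by linarith) le_rfl hji hM
      (hKv.trans (le_max_left K 1)) hz
    have hgw := hw.gevreyBound (by linarith) hH₁ (by linarith) hji le_rfl hM
      (hKw.trans (le_max_left K 1)) hz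
    have hguv := hgu.mpw_mul hs hH₁ (hH₁.trans hH) hj (by linarith) (by linarith)
      (uniqueDiffOn_strip hp₀) hu.1.1 hv.1.1 hz hgv
    exact (hguv.mpw_mul hs hH₁ (hH₁.trans hH) hj (by linarith) (by linarith)
      (uniqueDiffOn_strip hp₀) (hu.1.1.mul hv.1.1) hw.1.1 hz hgw).abs_le hH₁ hH ha hb (by omega)

/-- If `u ∈ 𝒜₂` and `v ∈ 𝒜₁` then `c_*⁻¹ uv ∈ 𝒜₁` for a constant `c_*` depending only on
the `C²`-norms of `u, v` (and independent of `α₀, H₁, H₂`); if additionally `w ∈ 𝒜₂` then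
`c_*'⁻¹ uvw ∈ 𝒜₁`. -/
theorem memA_two_one_mul (p₀ μ s K : ℝ) (hp₀ : p₀ < 0) (hμ : μ ∈ Set.Ioo (0 : ℝ) 1)
    (hs : 1 ≤ s) :
    (∃ c : ℝ, 1 ≤ c ∧ ∀ (α₀ : ℕ × ℕ) (H₁ H₂ : ℝ) (u v : ℝ × ℝ → ℝ),
      3 ≤ α₀.1 + α₀.2 → 1 ≤ H₁ → H₁ ≤ H₂ →
      cknorm p₀ 2 u ≤ K → cknorm p₀ 2 v ≤ K →
      memA p₀ μ s H₁ H₂ α₀ 2 u → memA p₀ μ s H₁ H₂ α₀ 1 v →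
      ∀ a b : ℕ, a ≤ α₀.1 → b ≤ α₀.2 → 2 ≤ a + b → ∀ z ∈ Strip p₀,
        |pd p₀ a b (fun y => u y * v y) z| ≤
          c * H₁ ^ ((a : ℤ) - 1) * H₂ ^ b * (Nat.factorial (a + b - 2) : ℝ) ^ s) ∧
    (∃ c' : ℝ, 1 ≤ c' ∧ ∀ (α₀ : ℕ × ℕ) (H₁ H₂ : ℝ) (u v w : ℝ × ℝ → ℝ),
      3 ≤ α₀.1 + α₀.2 → 1 ≤ H₁ → H₁ ≤ H₂ →
      cknorm p₀ 2 u ≤ K → cknorm p₀ 2 v ≤ K → cknorm p₀ 2 w ≤ K →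
      memA p₀ μ s H₁ H₂ α₀ 2 u → memA p₀ μ s H₁ H₂ α₀ 1 v → memA p₀ μ s H₁ H₂ α₀ 2 w →
      ∀ a b : ℕ, a ≤ α₀.1 → b ≤ α₀.2 → 2 ≤ a + b → ∀ z ∈ Strip p₀,
        |pd p₀ a b (fun y => u y * v y * w y) z| ≤
          c' * H₁ ^ ((a : ℤ) - 1) * H₂ ^ b * (Nat.factorial (a + b - 2) : ℝ) ^ s) := by
  obtain ⟨⟨c, hc, huv⟩, c', hc', huvw⟩ :=
    memA_two_one_mul_general (i := 2) (j := 1) le_rfl one_le_two K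
  exact ⟨⟨c, hc, fun α₀ H₁ H₂ u v _ => huv p₀ μ s H₁ H₂ α₀ u v hp₀ hs⟩,
    c', hc', fun α₀ H₁ H₂ u v w _ => huvw p₀ μ s H₁ H₂ α₀ u v w hp₀ hs⟩
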